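/- All complex roots of R are real and simple, R has no roots in [0,∞), and for each ℓ = 1,…,k′−1 the open interval I_ℓ = (x_{2ℓ}, x_{2ℓ−1}) contains exactly one root of R; since deg R = k′−1, the roots of R are exactly one in each gap I_ℓ and there are no other roots. -/

import Mathlib

open Polynomial Matrix

/-- The matrix `A_m(z)` with rows `(z + α β⁻¹, α + β)` and `(z(α⁻¹+β⁻¹), z + β α⁻¹)`. -/
noncomputable def aztecA (a b : ℝ) (z : ℂ) : Matrix (Fin 2) (Fin 2) ℂ :=
  !![z + (a : ℂ) * ((b : ℂ))⁻¹, (a : ℂ) + (b : ℂ);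
     z * (((a : ℂ))⁻¹ + ((b : ℂ))⁻¹), z + (b : ℂ) * ((a : ℂ))⁻¹]

/-- `T(z) = A_1(z) A_2(z) ⋯ A_k(z)`. -/
noncomputable def aztecT {k : ℕ} (α β : Fin k → ℝ) (z : ℂ) : Matrix (Fin 2) (Fin 2) ℂ :=
  (List.ofFn fun m => aztecA (α m) (β m) z).prod

/-! Write `D_n f = (X - a) f' - n f` for the numerator of the derivative of `f / (X - a) ^ n`, and
let `p = t² - c (X - a) ^ (2k) = q² p₀` with `D_k t = q R`. Differentiating
`p / (X - a) ^ (2k) = (t / (X - a) ^ k)² - c` gives `D_{2k} p = 2 t D_k t = 2 t q R`.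
On a gap `p₀` is positive, so `p / (X - a) ^ (2k)` is nonnegative there, vanishes at both ends and
has a positive maximum in between. At the maximum `D_{2k} p` vanishes, but `q` and `t` do not,
because `0 < p = q² p₀` and `p ≤ t²`; hence `R` vanishes. Comparing degrees in
`2 t q R = D_{2k} p`, where `deg p` is odd, bounds `deg R` by the number of gaps, so that there is
exactly one root in each gap and there are no others. -/

/-- `divPowDeriv a n p` is the numerator of the derivative of a quotient by a power:
`(p / (X - a) ^ n)' = divPowDeriv a n p / (X - a) ^ (n + 1)`. The polynomial `(X - 1) t' - k t`
divided by `q` in the definition of `R` is `divPowDeriv 1 k t`. -/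
noncomputable def divPowDeriv {A : Type*} [CommRing A] (a : A) (n : ℕ) (p : A[X]) : A[X] :=
  (X - C a) * derivative p - C (n : A) * p

section Algebra

variable {A : Type*} [CommRing A]

lemma X_sub_C_mul_derivative_X_sub_C_pow (a : A) (n : ℕ) :
    (X - C a) * derivative ((X - C a) ^ n) = C (n : A) * (X - C a) ^ n := by
  cases n with
  | zero => simp
  | succ n => rw [derivative_X_sub_C_pow, Nat.add_sub_cancel]; ring

lemma divPowDeriv_sq_sub (a c : A) (k : ℕ) (t : A[X]) :
    divPowDeriv a (2 * k) (t ^ 2 - C c * (X - C a) ^ (2 * k)) = 2 * t * divPowDeriv a k t := by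
  have hpow := X_sub_C_mul_derivative_X_sub_C_pow a (2 * k)
  simp only [divPowDeriv, derivative_sub, derivative_sq, derivative_C_mul, Nat.cast_mul,
    Nat.cast_ofNat, C_mul, C_ofNat] at hpow ⊢
  linear_combination -C c * hpow

lemma coeff_divPowDeriv (a : A) (n : ℕ) (p : A[X]) (m : ℕ) :
    (divPowDeriv a n p).coeff m = (m - n) * p.coeff m - a * (p.coeff (m + 1) * (m + 1)) := by
  have hX : (X * derivative p).coeff m = m * p.coeff m := by
    cases m with
    | zero => simp
    | succ m => simp [coeff_derivative, mul_comm]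
  simp only [divPowDeriv, sub_mul, coeff_sub, hX, coeff_C_mul, coeff_derivative]
  ring

variable [NoZeroDivisors A]

lemma natDegree_divPowDeriv (a : A) {n : ℕ} {p : A[X]}
    (hn : (p.natDegree : A) ≠ n) : (divPowDeriv a n p).natDegree = p.natDegree := by
  rcases eq_or_ne p 0 with rfl | hp
  · simp [divPowDeriv]
  refine natDegree_eq_of_le_of_coeff_ne_zero (natDegree_le_iff_coeff_eq_zero.2 fun m hm => ?_) ?_
  · simp [coeff_divPowDeriv, coeff_eq_zero_of_natDegree_lt hm,
      coeff_eq_zero_of_natDegree_lt (hm.trans m.lt_succ_self)]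
  · simpa [coeff_divPowDeriv, coeff_eq_zero_of_natDegree_lt, sub_eq_zero] using ⟨hn, hp⟩

lemma natDegree_sq_sub_lt_of_odd {t s : A[X]} {c : A}
    (hodd : Odd (t ^ 2 - C c * s ^ 2).natDegree) :
    (t ^ 2 - C c * s ^ 2).natDegree < 2 * t.natDegree := by
  by_contra! hle
  have hlt : (t ^ 2).natDegree < (t ^ 2 - C c * s ^ 2).natDegree := by
    rw [natDegree_pow]
    exact hle.lt_of_ne fun h => Nat.not_even_iff_odd.2 hodd (h ▸ even_two_mul _)
  have hdeg := natDegree_sub_eq_right_of_natDegree_lt hlt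
  rw [sub_sub_cancel] at hdeg
  rcases eq_or_ne c 0 with rfl | hc
  · simp at hlt
  · rw [natDegree_C_mul hc, natDegree_pow] at hdeg
    exact Nat.not_even_iff_odd.2 hodd (hdeg ▸ even_two_mul _)

variable [CharZero A] {a c : A} {k : ℕ} {t q p₀ R : A[X]}

/-- As `divPowDeriv` preserves the odd degree of `q² p₀`, the identity `divPowDeriv_sq_sub` gives
`deg t + deg q + deg R = 2 deg q + deg p₀`, while `2 deg t` exceeds the right-hand side. -/
lemma ne_zero_and_two_mul_natDegree_lt_of_odd
    (hdisc : t ^ 2 - C c * (X - C a) ^ (2 * k) = q ^ 2 * p₀) (hq : q ≠ 0)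
    (hR : divPowDeriv a k t = q * R) (hodd : Odd p₀.natDegree) :
    R ≠ 0 ∧ 2 * R.natDegree < p₀.natDegree := by
  have hp₀ : p₀ ≠ 0 := by rintro rfl; simp at hodd
  have hdeg : (q ^ 2 * p₀).natDegree = 2 * q.natDegree + p₀.natDegree := by
    rw [natDegree_mul (pow_ne_zero 2 hq) hp₀, natDegree_pow]
  have hodd' : Odd (q ^ 2 * p₀).natDegree := hdeg ▸ (even_two_mul _).add_odd hodd
  have hlt : 2 * q.natDegree + p₀.natDegree < 2 * t.natDegree := by
    rw [← hdeg, ← hdisc, mul_comm 2 k, pow_mul]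
    refine natDegree_sq_sub_lt_of_odd ?_
    rwa [← pow_mul, mul_comm k 2, hdisc]
  have hkey : 2 * t * (q * R) = divPowDeriv a (2 * k) (q ^ 2 * p₀) := by
    rw [← hdisc, divPowDeriv_sq_sub, hR]
  have hkeydeg : (2 * t * (q * R)).natDegree = 2 * q.natDegree + p₀.natDegree := by
    rw [hkey, natDegree_divPowDeriv, hdeg]
    intro h
    exact Nat.not_even_iff_odd.2 hodd' (Nat.cast_injective h ▸ even_two_mul k)
  have hne : 2 * t * (q * R) ≠ 0 := by
    intro h0
    rw [h0, natDegree_zero] at hkeydeg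
    have := hodd.pos
    omega
  simp only [ne_eq, mul_eq_zero, not_or] at hne
  obtain ⟨⟨h2, ht⟩, -, hR0⟩ := hne
  rw [natDegree_mul (mul_ne_zero h2 ht) (mul_ne_zero hq hR0), natDegree_mul h2 ht,
    natDegree_mul hq hR0, natDegree_ofNat] at hkeydeg
  exact ⟨hR0, by omega⟩

end Algebra

section Critical

lemma hasDerivAt_eval_div_pow {𝕜 : Type*} [NontriviallyNormedField 𝕜] (p : 𝕜[X]) (n : ℕ)
    {a z : 𝕜} (hz : z ≠ a) :
    HasDerivAt (fun w => p.eval w / (w - a) ^ n)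
      ((divPowDeriv a n p).eval z / (z - a) ^ (n + 1)) z := by
  have hza : z - a ≠ 0 := sub_ne_zero.2 hz
  refine ((p.hasDerivAt z).div (((hasDerivAt_id z).sub_const a).pow n)
    (pow_ne_zero n hza)).congr_deriv ?_
  cases n with
  | zero => simp [divPowDeriv]; field_simp
  | succ n =>
    simp only [divPowDeriv, eval_sub, eval_mul, eval_X, eval_C, id_eq, Nat.add_sub_cancel,
      Pi.pow_apply]
    field_simp
    ring

lemma exists_eval_pos_and_eval_divPowDeriv_eq_zero {p : ℝ[X]} {a u v w : ℝ} {n : ℕ} (hn : Even n)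
    (ha : a ∉ Set.Icc u v) (hu : p.eval u = 0) (hv : p.eval v = 0) (hw : w ∈ Set.Ioo u v)
    (hpos : 0 < p.eval w) :
    ∃ y ∈ Set.Ioo u v, 0 < p.eval y ∧ (divPowDeriv a n p).eval y = 0 := by
  have hne : ∀ z ∈ Set.Icc u v, z ≠ a := fun z hz hza => ha (hza ▸ hz)
  have hden : ∀ z ∈ Set.Icc u v, 0 < (z - a) ^ n := fun z hz =>
    hn.pow_pos (sub_ne_zero.2 (hne z hz))
  have hcont : ContinuousOn (fun z => p.eval z / (z - a) ^ n) (Set.Icc u v) := fun z hz =>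
    (hasDerivAt_eval_div_pow p n (hne z hz)).continuousAt.continuousWithinAt
  have hw' := Set.Ioo_subset_Icc_self hw
  have hfrac : 0 < p.eval w / (w - a) ^ n := div_pos hpos (hden w hw')
  obtain ⟨y, hy, hmax⟩ : ∃ y ∈ Set.Ioo u v,
      IsMaxOn (fun z => p.eval z / (z - a) ^ n) (Set.Icc u v) y := by
    refine isCompact_Icc.exists_isMaxOn_mem_subset hcont hw' ?_
    rw [Set.Icc_sdiff_Ioo_same (hw.1.trans hw.2).le]
    rintro z (rfl | rfl) <;> simpa [hu, hv] using hfrac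
  have hy' := Set.Ioo_subset_Icc_self hy
  refine ⟨y, hy, ?_, ?_⟩
  · exact (div_pos_iff_of_pos_right (hden y hy')).1 (hfrac.trans_le (hmax hw'))
  · have hderiv := (hmax.isLocalMax (Icc_mem_nhds hy.1 hy.2)).hasDerivAt_eq_zero
      (hasDerivAt_eval_div_pow p n (hne y hy'))
    exact (div_eq_zero_iff.1 hderiv).resolve_right (pow_ne_zero _ (sub_ne_zero.2 (hne y hy')))

lemma exists_eval_eq_zero_of_pos_between {a c u v : ℝ} {k : ℕ} {t q p₀ R : ℝ[X]} (hc : 0 ≤ c)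
    (hdisc : t ^ 2 - C c * (X - C a) ^ (2 * k) = q ^ 2 * p₀) (hq : q ≠ 0)
    (hR : divPowDeriv a k t = q * R) (huv : u < v) (ha : a ∉ Set.Icc u v)
    (hu : p₀.eval u = 0) (hv : p₀.eval v = 0) (hpos : ∀ y ∈ Set.Ioo u v, 0 < p₀.eval y) :
    ∃ y ∈ Set.Ioo u v, R.eval y = 0 := by
  obtain ⟨w, hw, hqw⟩ : ∃ w ∈ Set.Ioo u v, q.eval w ≠ 0 := by
    by_contra! hzero
    exact hq (eq_zero_of_infinite_isRoot q ((Set.Ioo_infinite huv).mono hzero))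
  have hpw : 0 < (q ^ 2 * p₀).eval w := by
    rw [eval_mul, eval_pow]
    exact mul_pos (sq_pos_of_ne_zero hqw) (hpos w hw)
  obtain ⟨y, hy, hpy, hcrit⟩ := exists_eval_pos_and_eval_divPowDeriv_eq_zero (even_two_mul k) ha
    (by simp [hu]) (by simp [hv]) hw hpw
  have hqy : q.eval y ≠ 0 := by rintro h; simp [h] at hpy
  have hty : t.eval y ≠ 0 := by
    intro ht
    have hle : 0 ≤ c * (y - a) ^ (2 * k) := mul_nonneg hc ((even_two_mul k).pow_nonneg _)
    rw [← hdisc] at hpy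
    simp only [eval_sub, eval_pow, eval_mul, eval_C, eval_X, ht] at hpy
    linarith
  rw [← hdisc, divPowDeriv_sq_sub, hR] at hcrit
  exact ⟨y, hy, by simpa [hty, hqy] using hcrit⟩

end Critical

section Roots

variable {ι K : Type*} [Fintype ι] [CommRing K] [IsDomain K] {P : K[X]}

lemma roots_eq_map_univ_of_injective (hP : P ≠ 0) (hdeg : P.natDegree ≤ Fintype.card ι)
    {y : ι → K} (hy : Function.Injective y) (hroot : ∀ i, P.eval (y i) = 0) :
    P.roots = Finset.univ.val.map y :=
  roots_eq_of_natDegree_le_card_of_ne_zero (S := Finset.univ.map ⟨y, hy⟩)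
    (by simpa using hroot) (by simpa using hdeg) hP

lemma splits_of_roots_eq_map_univ {y : ι → K} (hdeg : P.natDegree ≤ Fintype.card ι)
    (hroots : P.roots = Finset.univ.val.map y) : P.Splits :=
  splits_iff_card_roots.2 (P.card_roots'.antisymm (by simpa [hroots] using hdeg))

open scoped Function in
lemma splits_and_existsUnique_root_of_pairwise_disjoint (hP : P ≠ 0)
    (hdeg : P.natDegree ≤ Fintype.card ι) {I : ι → Set K} (hI : Pairwise (Disjoint on I))
    (hroot : ∀ i, ∃ y ∈ I i, P.eval y = 0) :
    P.Splits ∧ P.roots.Nodup ∧ (∀ i, ∃! y, y ∈ I i ∧ P.eval y = 0) ∧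
      ∀ y, P.eval y = 0 → ∃ i, y ∈ I i := by
  choose r hr hr0 using hroot
  have heq : ∀ {i j}, r i ∈ I j → i = j := fun hi =>
    by_contra fun hne => Set.disjoint_left.1 (hI hne) (hr _) hi
  have hinj : Function.Injective r := fun i j hij => heq (hij ▸ hr j)
  have hroots := roots_eq_map_univ_of_injective hP hdeg hinj hr0
  have hsurj : ∀ y, P.eval y = 0 → ∃ i, r i = y := fun y hy => by
    have hmem : y ∈ P.roots := (mem_roots hP).2 hy
    rw [hroots] at hmem
    obtain ⟨i, -, hi⟩ := Multiset.mem_map.1 hmem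
    exact ⟨i, hi⟩
  refine ⟨splits_of_roots_eq_map_univ hdeg hroots, hroots ▸ Finset.univ.nodup.map hinj,
    fun i => ⟨r i, ⟨hr i, hr0 i⟩, ?_⟩, fun y hy => ?_⟩
  · rintro y ⟨hyi, hy⟩
    obtain ⟨j, rfl⟩ := hsurj y hy
    rw [heq hyi]
  · obtain ⟨i, rfl⟩ := hsurj y hy
    exact ⟨i, hr i⟩

end Roots

section Positivity

variable {ι K : Type*} [CommRing K] [LinearOrder K] [IsStrictOrderedRing K]

lemma prod_pos_of_even_card_neg {s : Finset ι} {f : ι → K} (hne : ∀ i ∈ s, f i ≠ 0)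
    (heven : Even (s.filter (f · < 0)).card) : 0 < ∏ i ∈ s, f i := by
  rw [← Finset.prod_filter_mul_prod_filter_not s (f · < 0)]
  refine mul_pos ?_ (Finset.prod_pos fun i hi => ?_)
  · rw [← one_mul (∏ i ∈ _, _), ← heven.neg_one_pow, ← Finset.prod_neg]
    exact Finset.prod_pos fun i hi => neg_pos.2 (Finset.mem_filter.1 hi).2
  · obtain ⟨his, hnot⟩ := Finset.mem_filter.1 hi
    exact (not_lt.1 hnot).lt_of_ne' (hne i his)

lemma eval_pos_of_even_card_roots_gt [Fintype ι] {P : K[X]} (hlead : 0 < P.leadingCoeff)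
    (hdeg : P.natDegree ≤ Fintype.card ι) {x : ι → K} (hx : Function.Injective x)
    (hroot : ∀ i, P.eval (x i) = 0) {y : K} (hy : ∀ i, y ≠ x i)
    (heven : Even (Finset.univ.filter (y < x ·)).card) : 0 < P.eval y := by
  have hroots :=
    roots_eq_map_univ_of_injective (leadingCoeff_ne_zero.1 hlead.ne') hdeg hx hroot
  rw [(splits_of_roots_eq_map_univ hdeg hroots).eval_eq_prod_roots, hroots, Multiset.map_map]
  exact mul_pos hlead (prod_pos_of_even_card_neg (fun i _ => sub_ne_zero.2 (hy i))
    (by simpa only [Function.comp_apply, sub_neg] using heven))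

end Positivity

section Gap

variable {n : ℕ}

/-- The gap `I_ℓ = (x_{2ℓ}, x_{2ℓ-1})`, `1 ≤ ℓ ≤ n - 1`, of a family
`x₀ > x₁ > ⋯ > x_{2(n-1)}`; the index `ℓ` ranges over a subtype so that there are exactly `n - 1`
gaps. -/
def gap {K : Type*} [Preorder K] (x : Fin (2 * n - 1) → K) (ℓ : Finset.Icc 1 (n - 1)) : Set K :=
  have hℓ := Finset.mem_Icc.1 ℓ.2
  Set.Ioo (x ⟨2 * ℓ, by omega⟩) (x ⟨2 * ℓ - 1, by omega⟩)

section Preorder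

variable {K : Type*} [Preorder K] {x : Fin (2 * n - 1) → K}

lemma lt_apply_of_mem_gap (hx : Antitone x) {ℓ : Finset.Icc 1 (n - 1)} {y : K} (hy : y ∈ gap x ℓ)
    {i : Fin (2 * n - 1)} (hi : (i : ℕ) < 2 * ℓ) : y < x i :=
  hy.2.trans_le (hx (Fin.mk_le_mk.2 (by omega)))

lemma apply_lt_of_mem_gap (hx : Antitone x) {ℓ : Finset.Icc 1 (n - 1)} {y : K} (hy : y ∈ gap x ℓ)
    {i : Fin (2 * n - 1)} (hi : 2 * (ℓ : ℕ) ≤ i) : x i < y :=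
  (hx (Fin.mk_le_mk.2 hi)).trans_lt hy.1

open scoped Function in
lemma pairwise_disjoint_gap (hx : Antitone x) : Pairwise (Disjoint on gap x) := by
  refine (pairwise_disjoint_on _).2 fun ℓ m hℓm => Set.disjoint_left.2 fun y hyℓ hym => ?_
  have hm := Finset.mem_Icc.1 m.2
  have hlt : (ℓ : ℕ) < m := hℓm
  have hyx : y < x ⟨2 * ℓ, by omega⟩ := lt_apply_of_mem_gap hx hym (by simp only; omega)
  exact (hyℓ.1.trans hyx).false

lemma card_filter_lt_of_mem_gap [DecidableLT K] (hx : Antitone x) {ℓ : Finset.Icc 1 (n - 1)}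
    {y : K} (hy : y ∈ gap x ℓ) : (Finset.univ.filter (y < x ·)).card = 2 * ℓ := by
  have hℓ := Finset.mem_Icc.1 ℓ.2
  have hiff : ∀ i, y < x i ↔ (i : ℕ) < 2 * ℓ := fun i =>
    ⟨fun h => by_contra fun hi => (h.trans (apply_lt_of_mem_gap hx hy (not_lt.1 hi))).false,
      lt_apply_of_mem_gap hx hy⟩
  simp only [hiff, Fin.card_filter_val_lt]
  omega

end Preorder

lemma eval_pos_of_mem_gap {K : Type*} [CommRing K] [LinearOrder K] [IsStrictOrderedRing K]
    {P : K[X]} (hlead : 0 < P.leadingCoeff) (hdeg : P.natDegree ≤ 2 * n - 1)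
    {x : Fin (2 * n - 1) → K} (hx : StrictAnti x) (hroot : ∀ i, P.eval (x i) = 0)
    {ℓ : Finset.Icc 1 (n - 1)} {y : K} (hy : y ∈ gap x ℓ) : 0 < P.eval y := by
  refine eval_pos_of_even_card_roots_gt hlead (by simpa using hdeg) hx.injective hroot
    (fun i => ?_) ?_
  · rcases lt_or_ge (i : ℕ) (2 * ℓ) with hi | hi
    exacts [(lt_apply_of_mem_gap hx.antitone hy hi).ne, (apply_lt_of_mem_gap hx.antitone hy hi).ne']
  · exact card_filter_lt_of_mem_gap hx.antitone hy ▸ even_two_mul _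

lemma exists_mem_gap_eval_eq_zero {a c : ℝ} {k : ℕ} {t q p₀ R : ℝ[X]} (hc : 0 ≤ c)
    (hdisc : t ^ 2 - C c * (X - C a) ^ (2 * k) = q ^ 2 * p₀) (hq : q ≠ 0)
    (hR : divPowDeriv a k t = q * R) (hlead : 0 < p₀.leadingCoeff)
    (hdeg : p₀.natDegree ≤ 2 * n - 1) {x : Fin (2 * n - 1) → ℝ} (hx : StrictAnti x)
    (hxa : ∀ i, x i ≤ a) (hroot : ∀ i, p₀.eval (x i) = 0) (ℓ : Finset.Icc 1 (n - 1)) :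
    ∃ y ∈ gap x ℓ, R.eval y = 0 := by
  have hℓ := Finset.mem_Icc.1 ℓ.2
  refine exists_eval_eq_zero_of_pos_between hc hdisc hq hR (hx (Fin.mk_lt_mk.2 (by omega)))
    (fun ha => ha.2.not_gt ?_) (hroot _) (hroot _)
    fun y hy => eval_pos_of_mem_gap hlead hdeg hx hroot hy
  exact (hx (Fin.mk_lt_mk.2 (by omega : 0 < 2 * (ℓ : ℕ) - 1))).trans_le (hxa ⟨0, by omega⟩)

end Gap

lemma sq_trace_sub_eq_of_aeval_eq {k : ℕ} {α β : Fin k → ℝ} {trT p : ℝ[X]}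
    (htr : ∀ z : ℂ, aeval z trT = trace (aztecT α β z))
    (hp : ∀ z : ℂ, aeval z p = (trace (aztecT α β z)) ^ 2 - 4 * (z - 1) ^ (2 * k)) :
    trT ^ 2 - C 4 * (X - C 1) ^ (2 * k) = p := by
  refine map_injective (algebraMap ℝ ℂ) (algebraMap ℝ ℂ).injective (funext fun z => ?_)
  simp [eval_map_algebraMap, hp z, htr z]

theorem stmt7_general {a c : ℝ} {k n : ℕ} {t q p₀ R : ℝ[X]} (hc : 0 ≤ c) (hn : 1 ≤ n)
    (hdisc : t ^ 2 - C c * (X - C a) ^ (2 * k) = q ^ 2 * p₀) (hq : q ≠ 0)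
    (hlead : 0 < p₀.leadingCoeff) (hdeg : p₀.natDegree = 2 * n - 1)
    {x : Fin (2 * n - 1) → ℝ} (hxa : x ⟨0, by omega⟩ ≤ a) (hx : StrictAnti x)
    (hroot : ∀ i, p₀.eval (x i) = 0)
    (hR : (X - C a) * derivative t - C (k : ℝ) * t = q * R) :
    (∀ z : ℂ, aeval z R = 0 → z.im = 0) ∧
    (∀ y : ℝ, R.rootMultiplicity y ≤ 1) ∧
    (∀ y : ℝ, x ⟨0, by omega⟩ ≤ y → R.eval y ≠ 0) ∧
    (∀ ℓ : ℕ, ∀ _h1 : 1 ≤ ℓ, ∀ _h2 : ℓ ≤ n - 1,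
      ∃! y : ℝ,
        y ∈ Set.Ioo (x ⟨2 * ℓ, by omega⟩) (x ⟨2 * ℓ - 1, by omega⟩) ∧ R.eval y = 0) ∧
    (∀ y : ℝ, R.eval y = 0 →
      ∃ ℓ : ℕ, ∃ _h1 : 1 ≤ ℓ, ∃ _h2 : ℓ ≤ n - 1,
        y ∈ Set.Ioo (x ⟨2 * ℓ, by omega⟩) (x ⟨2 * ℓ - 1, by omega⟩)) := by
  obtain ⟨hR0, hRlt⟩ :=
    ne_zero_and_two_mul_natDegree_lt_of_odd hdisc hq hR (hdeg ▸ ⟨n - 1, by omega⟩)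
  have hRdeg : R.natDegree ≤ Fintype.card (Finset.Icc 1 (n - 1)) := by
    rw [Fintype.card_coe, Nat.card_Icc]
    omega
  have hanti := hx.antitone
  have hxa' : ∀ i, x i ≤ a := fun i => (hanti (Fin.mk_le_mk.2 i.val.zero_le)).trans hxa
  obtain ⟨hsplits, hnodup, hunique, hmem⟩ := splits_and_existsUnique_root_of_pairwise_disjoint hR0
    hRdeg (pairwise_disjoint_gap hanti)
    (exists_mem_gap_eval_eq_zero hc hdisc hq hR hlead hdeg.le hx hxa' hroot)
  refine ⟨fun z hz => ?_, fun y => ?_, fun y hy hy0 => ?_, fun ℓ h1 h2 => ?_, fun y hy0 => ?_⟩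
  · rw [← eval_map_algebraMap] at hz
    obtain ⟨y, rfl⟩ := hsplits.mem_range_of_isRoot hR0 hz
    exact Complex.ofReal_im y
  · exact count_roots R ▸ Multiset.nodup_iff_count_le_one.1 hnodup y
  · obtain ⟨ℓ, hℓ⟩ := hmem y hy0
    have hℓ1 := (Finset.mem_Icc.1 ℓ.2).1
    exact (lt_apply_of_mem_gap hanti hℓ (Nat.mul_pos two_pos hℓ1)).not_ge hy
  · exact hunique ⟨ℓ, Finset.mem_Icc.2 ⟨h1, h2⟩⟩
  · obtain ⟨ℓ, hℓ⟩ := hmem y hy0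
    obtain ⟨h1, h2⟩ := Finset.mem_Icc.1 ℓ.2
    exact ⟨ℓ, h1, h2, hℓ⟩

/-- all roots of `R` are real and simple, none lie in `[0,∞)`, each gap
`I_ℓ = (x_{2ℓ}, x_{2ℓ−1})` (`ℓ = 1,…,k′−1`) contains exactly one root of `R`, and these
are all the roots. -/
theorem stmt7 (k : ℕ) (hk : 1 ≤ k) (α β : Fin k → ℝ)
    (hα : ∀ m, 0 < α m) (hβ : ∀ m, 0 < β m)
    (hprod : ∏ m, α m = ∏ m, β m)
    (trT p : Polynomial ℝ)
    (htr : ∀ z : ℂ, Polynomial.aeval z trT = Matrix.trace (aztecT α β z))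
    (hp : ∀ z : ℂ, Polynomial.aeval z p
        = (Matrix.trace (aztecT α β z)) ^ 2 - 4 * (z - 1) ^ (2 * k))
    (k' : ℕ) (hk'1 : 1 ≤ k') (hk'k : k' ≤ k)
    (q p₀ : Polynomial ℝ) (hq : q.Monic) (hp₀sf : Squarefree p₀)
    (hp₀lead : 0 < p₀.leadingCoeff) (hfact : p = q ^ 2 * p₀)
    (hp₀deg : p₀.natDegree = 2 * k' - 1)
    (x : Fin (2 * k' - 1) → ℝ) (hx0 : x ⟨0, by omega⟩ = 0) (hxanti : StrictAnti x)
    (hxroot : ∀ i, p₀.eval (x i) = 0)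
    (R : Polynomial ℝ)
    (hR : (X - 1) * Polynomial.derivative trT - Polynomial.C (k : ℝ) * trT = q * R)
    (hRdeg : R.natDegree = k' - 1) :
    (∀ z : ℂ, Polynomial.aeval z R = 0 → z.im = 0) ∧
    (∀ y : ℝ, R.rootMultiplicity y ≤ 1) ∧
    (∀ y : ℝ, 0 ≤ y → R.eval y ≠ 0) ∧
    (∀ ℓ : ℕ, ∀ _h1 : 1 ≤ ℓ, ∀ _h2 : ℓ ≤ k' - 1,
      ∃! y : ℝ,
        y ∈ Set.Ioo (x ⟨2 * ℓ, by omega⟩) (x ⟨2 * ℓ - 1, by omega⟩) ∧ R.eval y = 0) ∧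
    (∀ y : ℝ, R.eval y = 0 →
      ∃ ℓ : ℕ, ∃ _h1 : 1 ≤ ℓ, ∃ _h2 : ℓ ≤ k' - 1,
        y ∈ Set.Ioo (x ⟨2 * ℓ, by omega⟩) (x ⟨2 * ℓ - 1, by omega⟩)) := by
  simpa only [hx0] using stmt7_general (a := 1) (c := 4) (by norm_num) hk'1
    ((sq_trace_sub_eq_of_aeval_eq htr hp).trans hfact) hq.ne_zero hp₀lead hp₀deg
    (hx0.trans_le zero_le_one) hxanti hxroot (by simpa using hR)
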